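/- arXiv:2211.15506 — 2 statements merged into one kernel-verified Lean document; each statement's English description precedes it below -/
import Mathlib

section
/- Let γ > 0, δ > 0 and let u : [0, δ] → ℂ be a C^∞ function such that u^(m)(δ) = 0 for every integer m ≥ 0. Then the oscillatory integral ∫₀^δ θ^{γ−1} u(θ) e^{i n θ} dθ admits, as n → ∞, the asymptotic expansion Σ_{m=0}^{∞} u^(m)(0) Γ(m+γ) e^{iπ(m+γ)/2} / (m! · n^{m+γ}); precisely, for every natural number M there exists a constant C > 0 such that for all integers n ≥ 1, |∫₀^δ θ^{γ−1} u(θ) e^{i n θ} dθ − Σ_{m=0}^{M−1} u^(m)(0) Γ(m+γ) e^{iπ(m+γ)/2} / (m! · n^{m+γ})| ≤ C · n^{−(M+γ)}. -/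
open MeasureTheory Set Filter Topology

noncomputable def oscI (a N : ℝ) (j : ℕ) (θ t : ℝ) : ℂ :=
  (t : ℂ) ^ j * ((θ : ℂ) + t * Complex.I) ^ (a : ℂ) * (Real.exp (-(N * t)) : ℂ)

noncomputable def oscF (a N : ℝ) (j : ℕ) (θ : ℝ) : ℂ := ∫ t in Ioi (0:ℝ), oscI a N j θ t

lemma osc_rpow_le (a c : ℝ) (hc : 0 < c) :
    ∃ C : ℝ, 0 < C ∧ ∀ r : ℝ, c ≤ r → r ^ a ≤ C * Real.exp (r / 2) := by
  obtain ⟨k, hk⟩ := exists_nat_ge a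
  refine ⟨c ^ a * (2 / c) ^ k * k.factorial, by positivity, fun r hr => ?_⟩
  have hr0 : 0 < r := hc.trans_le hr
  have h1 : 1 ≤ r / c := by rwa [one_le_div hc]
  have h2 : r ^ a = c ^ a * (r / c) ^ a := by
    rw [← Real.mul_rpow hc.le (by positivity)]; congr 1; field_simp
  have h3 : (r / c) ^ a ≤ (r / c) ^ k := by
    rw [← Real.rpow_natCast]; exact Real.rpow_le_rpow_of_exponent_le h1 hk
  have h4 := Real.pow_div_factorial_le_exp (r / 2) (by positivity) k
  have h5 : (r / c) ^ k = (2 / c) ^ k * k.factorial * ((r / 2) ^ k / k.factorial) := by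
    have : r / c = (2 / c) * (r / 2) := by field_simp
    rw [this, mul_pow]; field_simp
  calc r ^ a = c ^ a * (r / c) ^ a := h2
    _ ≤ c ^ a * ((2 / c) ^ k * k.factorial * ((r / 2) ^ k / k.factorial)) := by
        rw [← h5]; gcongr
    _ ≤ c ^ a * ((2 / c) ^ k * k.factorial * Real.exp (r / 2)) := by gcongr
    _ = _ := by ring

lemma osc_norm_ge (θ t : ℝ) : t ≤ ‖(θ : ℂ) + t * Complex.I‖ := by
  have := Complex.abs_im_le_norm ((θ : ℂ) + t * Complex.I)
  simp at this
  exact (le_abs_self t).trans this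

lemma osc_norm_ge' (θ t : ℝ) : θ ≤ ‖(θ : ℂ) + t * Complex.I‖ := by
  have := Complex.abs_re_le_norm ((θ : ℂ) + t * Complex.I)
  simp at this
  exact (le_abs_self θ).trans this

lemma osc_norm_le (θ t : ℝ) (hθ : 0 ≤ θ) (ht : 0 ≤ t) : ‖(θ : ℂ) + t * Complex.I‖ ≤ θ + t := by
  refine (norm_add_le _ _).trans ?_
  simp [abs_of_nonneg hθ, abs_of_nonneg ht]

lemma oscI_norm (a N : ℝ) (j : ℕ) (θ t : ℝ) (ht : 0 ≤ t) :
    ‖oscI a N j θ t‖ = t ^ j * ‖(θ : ℂ) + t * Complex.I‖ ^ a * Real.exp (-(N * t)) := by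
  unfold oscI
  rw [norm_mul, norm_mul, Complex.norm_cpow_real, norm_pow, Complex.norm_real, Complex.norm_real,
    Real.norm_of_nonneg ht, Real.norm_of_nonneg (Real.exp_pos _).le]

lemma osc_exp_le (N t : ℝ) (hN : 1 ≤ N) (ht : 0 ≤ t) :
    Real.exp (t / 2) * Real.exp (-(N * t)) ≤ Real.exp (-(N / 2 * t)) := by
  rw [← Real.exp_add]; apply Real.exp_le_exp.2; nlinarith

lemma oscI_bound2 (a c d : ℝ) (hc : 0 < c) :
    ∃ C : ℝ, 0 < C ∧ ∀ (N : ℝ) (j : ℕ) (θ t : ℝ), 1 ≤ N → c ≤ θ → θ ≤ d → 0 ≤ t →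
      ‖oscI a N j θ t‖ ≤ C * (t ^ j * Real.exp (-(N / 2 * t))) := by
  obtain ⟨C, hC, h⟩ := osc_rpow_le a c hc
  refine ⟨C * Real.exp (d / 2), by positivity, fun N j θ t hN h1 h2 ht => ?_⟩
  rw [oscI_norm _ _ _ _ _ ht]
  have h3 := h _ (h1.trans (osc_norm_ge' θ t))
  have h4 : Real.exp (‖(θ : ℂ) + t * Complex.I‖ / 2) ≤ Real.exp (d / 2) * Real.exp (t / 2) := by
    rw [← Real.exp_add]; apply Real.exp_le_exp.2
    have := osc_norm_le θ t (hc.le.trans h1) ht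
    linarith
  calc t ^ j * ‖(θ : ℂ) + t * Complex.I‖ ^ a * Real.exp (-(N * t))
      ≤ t ^ j * (C * (Real.exp (d / 2) * Real.exp (t / 2))) * Real.exp (-(N * t)) := by
        gcongr; exact h3.trans (by gcongr)
    _ = C * Real.exp (d / 2) * (t ^ j * (Real.exp (t / 2) * Real.exp (-(N * t)))) := by ring
    _ ≤ _ := by gcongr; exact osc_exp_le N t hN ht

noncomputable def oscD (a C N : ℝ) (j : ℕ) (t : ℝ) : ℝ :=
  t ^ (((j : ℝ) + a + 1) - 1) * Real.exp (-(N * t)) +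
    C * (t ^ (((j : ℝ) + 1) - 1) * Real.exp (-(N / 2 * t)))

lemma oscI_bound1 (a d : ℝ) (hd : 0 < d) :
    ∃ C : ℝ, 0 < C ∧ ∀ (N : ℝ) (j : ℕ) (θ t : ℝ), 1 ≤ N → 0 ≤ θ → θ ≤ d → 0 < t →
      ‖oscI a N j θ t‖ ≤ oscD a C N j t := by
  obtain ⟨C, hC, h⟩ := osc_rpow_le a d hd
  refine ⟨C * Real.exp (d / 2), by positivity, fun N j θ t hN h1 h2 ht => ?_⟩
  rw [oscI_norm _ _ _ _ _ ht.le]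
  have h0 : ‖(θ : ℂ) + t * Complex.I‖ ^ a ≤ t ^ a + C * (Real.exp (d / 2) * Real.exp (t / 2)) := by
    rcases le_total a 0 with ha | ha
    · have := Real.rpow_le_rpow_of_nonpos ht (osc_norm_ge θ t) ha
      have h5 : 0 < C * (Real.exp (d / 2) * Real.exp (t / 2)) := by positivity
      linarith
    · have h3 : ‖(θ : ℂ) + t * Complex.I‖ ^ a ≤ (d + t) ^ a := by
        apply Real.rpow_le_rpow (norm_nonneg _) _ ha
        have := osc_norm_le θ t h1 ht.le
        linarith
      have h4 := h (d + t) (by linarith)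
      rw [add_div, Real.exp_add] at h4
      have h5 : 0 < t ^ a := by positivity
      linarith
  unfold oscD
  have e1 : t ^ (((j : ℝ) + a + 1) - 1) = t ^ j * t ^ a := by
    rw [← Real.rpow_natCast, ← Real.rpow_add ht]; congr 1; ring
  have e2 : t ^ (((j : ℝ) + 1) - 1) = t ^ j := by
    rw [← Real.rpow_natCast]; congr 1; ring
  rw [e1, e2]
  calc t ^ j * ‖(θ : ℂ) + t * Complex.I‖ ^ a * Real.exp (-(N * t))
      ≤ t ^ j * (t ^ a + C * (Real.exp (d / 2) * Real.exp (t / 2))) * Real.exp (-(N * t)) := by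
        gcongr
    _ = t ^ j * t ^ a * Real.exp (-(N * t)) + C * Real.exp (d / 2) * (t ^ j * (Real.exp (t / 2) * Real.exp (-(N * t)))) := by ring
    _ ≤ _ := by gcongr; exact osc_exp_le N t hN ht.le

lemma osc_int (s b : ℝ) (hs : 0 < s) (hb : 0 < b) :
    IntegrableOn (fun t : ℝ => t ^ (s - 1) * Real.exp (-(b * t))) (Ioi 0) := by
  have := integrableOn_rpow_mul_exp_neg_mul_rpow (p := 1) (s := s - 1) (b := b) (by linarith)
    one_pos hb
  simpa [neg_mul] using this

lemma osc_int_nat (j : ℕ) (b : ℝ) (hb : 0 < b) :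
    IntegrableOn (fun t : ℝ => t ^ j * Real.exp (-(b * t))) (Ioi 0) := by
  have := osc_int ((j : ℝ) + 1) b (by positivity) hb
  simpa using this

lemma oscD_int (a C N : ℝ) (j : ℕ) (ha : -1 < a) (hN : 1 ≤ N) :
    IntegrableOn (oscD a C N j) (Ioi 0) := by
  have h0 : (0:ℝ) ≤ j := by positivity
  exact (osc_int _ N (by linarith) (by linarith)).add
    ((osc_int ((j : ℝ) + 1) (N / 2) (by positivity) (by linarith)).const_mul C)

lemma oscD_integral (a C N : ℝ) (j : ℕ) (ha : -1 < a) (hN : 1 ≤ N) :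
    ∫ t in Ioi (0:ℝ), oscD a C N j t = (1 / N) ^ ((j : ℝ) + a + 1) * Real.Gamma ((j : ℝ) + a + 1)
      + C * ((1 / (N / 2)) ^ ((j : ℝ) + 1) * Real.Gamma ((j : ℝ) + 1)) := by
  have h0 : (0:ℝ) ≤ j := by positivity
  unfold oscD
  rw [integral_add (osc_int _ N (by linarith) (by linarith))
    ((osc_int ((j : ℝ) + 1) (N / 2) (by positivity) (by linarith)).const_mul C),
    integral_const_mul, Real.integral_rpow_mul_exp_neg_mul_Ioi (by linarith) (by linarith),
    Real.integral_rpow_mul_exp_neg_mul_Ioi (by linarith) (by linarith)]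

lemma osc_slit (θ t : ℝ) (h : 0 < θ ∨ 0 < t) : (θ : ℂ) + t * Complex.I ∈ Complex.slitPlane := by
  rw [Complex.mem_slitPlane_iff]
  simp
  rcases h with h | h
  · exact Or.inl h
  · exact Or.inr h.ne'

lemma oscI_contOn (a N : ℝ) (j : ℕ) (θ : ℝ) : ContinuousOn (oscI a N j θ) (Ioi 0) := by
  intro t ht
  apply ContinuousAt.continuousWithinAt
  unfold oscI
  apply ContinuousAt.mul
  · apply ContinuousAt.mul (by fun_prop)
    exact ContinuousAt.cpow (by fun_prop) continuousAt_const (osc_slit θ t (Or.inr ht))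
  · fun_prop

lemma oscI_meas (a N : ℝ) (j : ℕ) (θ : ℝ) :
    AEStronglyMeasurable (oscI a N j θ) (volume.restrict (Ioi 0)) :=
  (oscI_contOn a N j θ).aestronglyMeasurable measurableSet_Ioi

lemma oscI_int (a N : ℝ) (j : ℕ) (θ : ℝ) (ha : -1 < a) (hN : 1 ≤ N) (hθ : 0 ≤ θ) :
    IntegrableOn (oscI a N j θ) (Ioi 0) := by
  obtain ⟨C, _, h⟩ := oscI_bound1 a (θ + 1) (by linarith)
  exact Integrable.mono' (oscD_int a C N j ha hN) (oscI_meas a N j θ)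
    ((ae_restrict_iff' measurableSet_Ioi).2 (ae_of_all _ fun t ht =>
      h N j θ t hN hθ (by linarith) ht))

lemma oscI_int' (a N : ℝ) (j : ℕ) (θ : ℝ) (hN : 1 ≤ N) (hθ : 0 < θ) :
    IntegrableOn (oscI a N j θ) (Ioi 0) := by
  obtain ⟨C, _, h⟩ := oscI_bound2 a θ θ hθ
  exact Integrable.mono' ((osc_int_nat j (N / 2) (by linarith)).const_mul C) (oscI_meas a N j θ)
    ((ae_restrict_iff' measurableSet_Ioi).2 (ae_of_all _ fun t ht =>
      h N j θ t hN le_rfl le_rfl (le_of_lt ht)))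

lemma oscF_bound (a d : ℝ) (ha : -1 < a) (hd : 0 < d) :
    ∃ C : ℝ, 0 < C ∧ ∀ (N : ℝ) (j : ℕ) (θ : ℝ), 1 ≤ N → 0 ≤ θ → θ ≤ d →
      ‖oscF a N j θ‖ ≤ (1 / N) ^ ((j : ℝ) + a + 1) * Real.Gamma ((j : ℝ) + a + 1)
      + C * ((1 / (N / 2)) ^ ((j : ℝ) + 1) * Real.Gamma ((j : ℝ) + 1)) := by
  obtain ⟨C, hC, h⟩ := oscI_bound1 a d hd
  refine ⟨C, hC, fun N j θ hN h1 h2 => ?_⟩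
  rw [← oscD_integral a C N j ha hN]
  exact norm_integral_le_of_norm_le (oscD_int a C N j ha hN)
    ((ae_restrict_iff' measurableSet_Ioi).2 (ae_of_all _ fun t ht => h N j θ t hN h1 h2 ht))

lemma oscF_cont (a N d : ℝ) (j : ℕ) (ha : -1 < a) (hN : 1 ≤ N) (hd : 0 < d) :
    ContinuousOn (oscF a N j) (Icc 0 d) := by
  obtain ⟨C, hC, h⟩ := oscI_bound1 a d hd
  refine continuousOn_of_dominated (fun θ _ => oscI_meas a N j θ)
    (fun θ hθ => (ae_restrict_iff' measurableSet_Ioi).2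
      (ae_of_all _ fun t ht => h N j θ t hN hθ.1 hθ.2 ht)) (oscD_int a C N j ha hN)
    ((ae_restrict_iff' measurableSet_Ioi).2 (ae_of_all _ fun t ht => ?_))
  intro θ _
  apply ContinuousAt.continuousWithinAt
  unfold oscI
  apply ContinuousAt.mul
  · apply ContinuousAt.mul (by fun_prop)
    exact ContinuousAt.cpow (by fun_prop) continuousAt_const (osc_slit θ t (Or.inr ht))
  · fun_prop

lemma oscF_zero (a N : ℝ) (j : ℕ) (ha : -1 < a) (hN : 1 ≤ N) :
    oscF a N j 0 = Complex.exp (Complex.I * Real.pi * a / 2) *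
      (Real.Gamma ((j : ℝ) + (a + 1)) : ℂ) / ((N ^ ((j : ℝ) + (a + 1)) : ℝ) : ℂ) := by
  have h0 : (0:ℝ) ≤ j := by positivity
  have h1 : oscF a N j 0 = ∫ t in Ioi (0:ℝ), Complex.exp (Complex.I * Real.pi * a / 2) *
      ((t ^ (((j : ℝ) + (a + 1)) - 1) * Real.exp (-(N * t)) : ℝ) : ℂ) := by
    unfold oscF
    refine setIntegral_congr_fun measurableSet_Ioi fun t ht => ?_
    have ht' : (0:ℝ) < t := ht
    have e1 : t ^ (((j : ℝ) + (a + 1)) - 1) = t ^ j * t ^ a := by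
      rw [← Real.rpow_natCast, ← Real.rpow_add ht']; congr 1; ring
    have e2 : ((t : ℂ) * Complex.I) ^ (a : ℂ) =
        (t : ℂ) ^ (a : ℂ) * Complex.exp (Complex.I * Real.pi * a / 2) := by
      rw [Complex.cpow_def_of_ne_zero (by simp [ht'.ne']),
        Complex.cpow_def_of_ne_zero (by simp [ht'.ne']), Complex.log_ofReal_mul ht' Complex.I_ne_zero,
        Complex.log_I, ← Complex.exp_add, Complex.ofReal_log ht'.le]
      congr 1; ring
    simp only [oscI]
    rw [e1]
    push_cast
    rw [zero_add, e2, Complex.ofReal_cpow ht'.le]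
    ring
  rw [h1, integral_const_mul, integral_complex_ofReal,
    Real.integral_rpow_mul_exp_neg_mul_Ioi (by linarith) (by linarith)]
  rw [Real.div_rpow zero_le_one (by linarith), Real.one_rpow]
  push_cast
  ring

lemma oscI_deriv_theta (a N : ℝ) (j : ℕ) (θ t : ℝ) (h : 0 < θ ∨ 0 < t) :
    HasDerivAt (fun θ => oscI a N j θ t) (a * oscI (a - 1) N j θ t) θ := by
  unfold oscI
  have h1 : HasDerivAt (fun z : ℂ => z + t * Complex.I) 1 (θ : ℂ) := (hasDerivAt_id _).add_const _
  have h2 := (h1.cpow_const (c := (a : ℂ)) (osc_slit θ t h)).comp_ofReal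
  have h3 := (h2.const_mul ((t : ℂ) ^ j)).mul_const (Real.exp (-(N * t)) : ℂ)
  refine h3.congr_deriv ?_
  push_cast
  ring

lemma oscI_deriv_t (a N : ℝ) (j : ℕ) (θ t : ℝ) (h : 0 < θ) :
    HasDerivAt (oscI a N j θ) (j * oscI a N (j - 1) θ t - N * oscI a N j θ t +
      Complex.I * a * oscI (a - 1) N j θ t) t := by
  unfold oscI
  have h1 : HasDerivAt (fun z : ℂ => (θ : ℂ) + z * Complex.I) Complex.I (t : ℂ) := by
    simpa using ((hasDerivAt_id (t : ℂ)).mul_const Complex.I).const_add (θ : ℂ)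
  have h2 := h1.cpow_const (c := (a : ℂ)) (osc_slit θ t (Or.inl h))
  have h4 : HasDerivAt (fun z : ℂ => Complex.exp (-(N * z)))
      (Complex.exp (-(N * t)) * (-N)) (t : ℂ) := by
    have := ((hasDerivAt_id (t : ℂ)).const_mul (N : ℂ)).neg.cexp
    simpa using this
  have h3 := (((hasDerivAt_pow j (t : ℂ)).mul h2).mul h4).comp_ofReal
  have e : (fun t : ℝ => (t : ℂ) ^ j * ((θ : ℂ) + t * Complex.I) ^ (a : ℂ) *
      (Real.exp (-(N * t)) : ℂ)) = fun t : ℝ => (t : ℂ) ^ j * ((θ : ℂ) + t * Complex.I) ^ (a : ℂ) *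
      Complex.exp (-(N * t)) := by
    ext t; push_cast; rfl
  rw [e]
  refine h3.congr_deriv ?_
  simp only [Pi.mul_apply]
  push_cast
  ring

lemma oscF_deriv (a N : ℝ) (j : ℕ) (θ : ℝ) (hN : 1 ≤ N) (hθ : 0 < θ) :
    HasDerivAt (oscF a N j) (a * oscF (a - 1) N j θ) θ := by
  obtain ⟨C, hC, h⟩ := oscI_bound2 (a - 1) (θ / 2) (2 * θ) (by linarith)
  have := (hasDerivAt_integral_of_dominated_loc_of_deriv_le
    (μ := volume.restrict (Ioi (0:ℝ))) (F := fun θ t => oscI a N j θ t)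
    (F' := fun θ t => a * oscI (a - 1) N j θ t) (x₀ := θ) (s := Icc (θ / 2) (2 * θ))
    (bound := fun t => |a| * (C * (t ^ j * Real.exp (-(N / 2 * t)))))
    (Icc_mem_nhds (by linarith) (by linarith))
    (Eventually.of_forall fun x => oscI_meas a N j x)
    (oscI_int' a N j θ hN hθ)
    ((oscI_meas (a - 1) N j θ).const_mul _)
    ((ae_restrict_iff' measurableSet_Ioi).2 (ae_of_all _ fun t ht x hx => ?_))
    (((osc_int_nat j (N / 2) (by linarith)).const_mul C).const_mul _)
    ((ae_restrict_iff' measurableSet_Ioi).2 (ae_of_all _ fun t ht x hx =>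
      oscI_deriv_theta a N j x t (Or.inr ht)))).2
  · unfold oscF
    rwa [integral_const_mul] at this
  · rw [norm_mul, Complex.norm_real, Real.norm_eq_abs]
    gcongr
    exact h N j x t hN hx.1 hx.2 (le_of_lt ht)

lemma oscF_rel (a N : ℝ) (j : ℕ) (θ : ℝ) (hN : 1 ≤ N) (hθ : 0 < θ) :
    j * oscF a N (j - 1) θ - N * oscF a N j θ + Complex.I * a * oscF (a - 1) N j θ =
      - oscI a N j θ 0 := by
  have i1 := (oscI_int' a N (j - 1) θ hN hθ).const_mul (j : ℂ)
  have i2 := (oscI_int' a N j θ hN hθ).const_mul (N : ℂ)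
  have i3 := (oscI_int' (a - 1) N j θ hN hθ).const_mul (Complex.I * a : ℂ)
  have := integral_Ioi_of_hasDerivAt_of_tendsto (f := oscI a N j θ) (a := 0) (m := 0)
    (oscI_deriv_t a N j θ 0 hθ).continuousAt.continuousWithinAt
    (fun t _ => oscI_deriv_t a N j θ t hθ) ((i1.sub i2).add i3) ?_
  · rw [zero_sub] at this
    rw [← this, integral_add (f := fun x => j * oscI a N (j - 1) θ x - N * oscI a N j θ x)
      (i1.sub i2) i3, integral_sub i1 i2, integral_const_mul,
      integral_const_mul, integral_const_mul]
    rfl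
  · obtain ⟨C, hC, h⟩ := oscI_bound2 a θ θ hθ
    have hb : 0 < N / 2 := by linarith
    have h1 := (tendsto_rpow_mul_exp_neg_mul_atTop_nhds_zero j (N / 2) hb).const_mul C
    rw [mul_zero] at h1
    refine squeeze_zero_norm' ?_ h1
    filter_upwards [eventually_ge_atTop 0] with t ht
    have := h N j θ t hN le_rfl le_rfl ht
    rwa [Real.rpow_natCast, neg_mul]

/-- normalized iterated antiderivatives -/
noncomputable def oscH (a N : ℝ) (j : ℕ) (θ : ℝ) : ℂ :=
  (-Complex.I) ^ (j + 1) / (j.factorial : ℂ) * (Complex.exp (Complex.I * N * θ) * oscF a N j θ)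

lemma oscH_deriv_aux (a N : ℝ) (j : ℕ) (θ : ℝ) (hN : 1 ≤ N) (hθ : 0 < θ) :
    HasDerivAt (oscH a N j) ((-Complex.I) ^ (j + 1) / (j.factorial : ℂ) *
      (Complex.exp (Complex.I * N * θ) * (Complex.I * (j * oscF a N (j - 1) θ + oscI a N j θ 0)))) θ := by
  have h1 : HasDerivAt (fun z : ℝ => Complex.exp (Complex.I * N * z))
      (Complex.exp (Complex.I * N * θ) * (Complex.I * N)) θ := by
    have := ((hasDerivAt_id (θ : ℂ)).const_mul (Complex.I * N : ℂ)).cexp.comp_ofReal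
    simpa using this
  have h2 := (h1.mul (oscF_deriv a N j θ hN hθ)).const_mul ((-Complex.I) ^ (j + 1) / (j.factorial : ℂ))
  refine h2.congr_deriv ?_
  have h3 := oscF_rel a N j θ hN hθ
  have h4 : oscI a N j θ 0 = -(j * oscF a N (j - 1) θ - N * oscF a N j θ +
      Complex.I * a * oscF (a - 1) N j θ) := by rw [h3, neg_neg]
  rw [h4]
  linear_combination (((-Complex.I) ^ (j + 1) / (j.factorial : ℂ) *
      Complex.exp (Complex.I * N * θ)) * a * oscF (a - 1) N j θ) * Complex.I_mul_I

lemma oscH_deriv_zero (a N : ℝ) (θ : ℝ) (hN : 1 ≤ N) (hθ : 0 < θ) :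
    HasDerivAt (oscH a N 0) ((θ ^ a : ℝ) * Complex.exp (Complex.I * N * θ)) θ := by
  refine (oscH_deriv_aux a N 0 θ hN hθ).congr_deriv ?_
  simp [oscI]
  rw [Complex.ofReal_cpow hθ.le]
  linear_combination -(θ : ℂ) ^ (a : ℂ) * Complex.exp (Complex.I * N * θ) * Complex.I_mul_I

lemma oscH_deriv_succ (a N : ℝ) (j : ℕ) (θ : ℝ) (hN : 1 ≤ N) (hθ : 0 < θ) :
    HasDerivAt (oscH a N (j + 1)) (oscH a N j θ) θ := by
  refine (oscH_deriv_aux a N (j + 1) θ hN hθ).congr_deriv ?_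
  have h : (j : ℂ) + 1 ≠ 0 := by exact_mod_cast Nat.succ_ne_zero j
  have h' : (j.factorial : ℂ) ≠ 0 := by exact_mod_cast j.factorial_ne_zero
  simp [oscI, oscH, Nat.factorial_succ]
  field_simp
  rw [pow_succ (-Complex.I) (j + 1)]
  linear_combination -((-Complex.I) ^ (j + 1) * oscF a N j θ) * Complex.I_mul_I

lemma oscH_cont (a N d : ℝ) (j : ℕ) (ha : -1 < a) (hN : 1 ≤ N) (hd : 0 < d) :
    ContinuousOn (oscH a N j) (Icc 0 d) := by
  unfold oscH
  refine continuousOn_const.mul (ContinuousOn.mul ?_ (oscF_cont a N d j ha hN hd))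
  fun_prop

lemma oscH_norm (a N : ℝ) (j : ℕ) (θ : ℝ) : ‖oscH a N j θ‖ ≤ ‖oscF a N j θ‖ := by
  unfold oscH
  have e : Complex.I * N * θ = ((N * θ : ℝ) : ℂ) * Complex.I := by push_cast; ring
  rw [norm_mul, norm_mul, e, Complex.norm_exp_ofReal_mul_I, norm_div, norm_pow, norm_neg,
    Complex.norm_I, one_pow, one_mul, Complex.norm_natCast]
  have : (1:ℝ) ≤ j.factorial := by exact_mod_cast Nat.one_le_iff_ne_zero.2 j.factorial_ne_zero
  have h2 : 1 / (j.factorial : ℝ) ≤ 1 := by rw [div_le_one (by linarith)]; exact this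
  exact mul_le_of_le_one_left (norm_nonneg _) h2

lemma oscH_zero (a N : ℝ) (j : ℕ) (ha : -1 < a) (hN : 1 ≤ N) :
    (-1) ^ (j + 1) * oscH a N j 0 = (Real.Gamma ((j : ℝ) + (a + 1)) : ℂ) *
      Complex.exp (Complex.I * Real.pi * ((j : ℝ) + (a + 1)) / 2) /
        ((j.factorial : ℂ) * ((N ^ ((j : ℝ) + (a + 1)) : ℝ) : ℂ)) := by
  have h1 : Complex.exp (Complex.I * Real.pi * ((j : ℝ) + (a + 1)) / 2) =
      Complex.I ^ (j + 1) * Complex.exp (Complex.I * Real.pi * a / 2) := by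
    have : Complex.I ^ (j + 1) = Complex.exp (((j + 1 : ℕ) : ℂ) * (Real.pi / 2 * Complex.I)) := by
      rw [Complex.exp_nat_mul, Complex.exp_pi_div_two_mul_I]
    rw [this, ← Complex.exp_add]
    congr 1
    push_cast; ring
  have h2 : (-1 : ℂ) ^ (j + 1) * (-Complex.I) ^ (j + 1) = Complex.I ^ (j + 1) := by
    rw [← mul_pow]; congr 1; ring
  unfold oscH
  rw [oscF_zero a N j ha hN, h1, ← h2]
  simp
  ring

lemma osc_identity (γ δ : ℝ) (hγ : 0 < γ) (hδ : 0 < δ) (u : ℝ → ℂ)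
    (hu : ContDiffOn ℝ (⊤ : ℕ∞) u (Set.Icc 0 δ))
    (hend : ∀ m : ℕ, iteratedDerivWithin m u (Set.Icc 0 δ) δ = 0) (N : ℝ) (hN : 1 ≤ N) (K : ℕ) :
    (∫ θ in (0:ℝ)..δ, u θ * ((θ ^ (γ - 1) : ℝ) * Complex.exp (Complex.I * N * θ))) =
      ∑ m ∈ Finset.range (K + 1), iteratedDerivWithin m u (Set.Icc 0 δ) 0 *
        ((-1) ^ (m + 1) * oscH (γ - 1) N m 0) +
      (-1) ^ (K + 1) * ∫ θ in (0:ℝ)..δ,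
        iteratedDerivWithin (K + 1) u (Set.Icc 0 δ) θ * oscH (γ - 1) N K θ := by
  have hud := uniqueDiffOn_Icc hδ
  have ha : -1 < γ - 1 := by linarith
  have hc : ∀ m : ℕ, ContinuousOn (iteratedDerivWithin m u (Set.Icc 0 δ)) (uIcc 0 δ) := by
    intro m
    rw [uIcc_of_le hδ.le]
    exact hu.continuousOn_iteratedDerivWithin (by exact_mod_cast le_top) hud
  have hd : ∀ m : ℕ, ∀ x ∈ Ioo (min 0 δ) (max 0 δ),
      HasDerivAt (iteratedDerivWithin m u (Set.Icc 0 δ))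
        (iteratedDerivWithin (m + 1) u (Set.Icc 0 δ) x) x := by
    intro m x hx
    rw [min_eq_left hδ.le, max_eq_right hδ.le] at hx
    have := (hu.differentiableOn_iteratedDerivWithin (m := m)
      (by exact_mod_cast ENat.natCast_lt_top m) hud x (Ioo_subset_Icc_self hx)).hasDerivWithinAt
    rw [iteratedDerivWithin_succ]
    exact this.hasDerivAt (Icc_mem_nhds hx.1 hx.2)
  have hH : ∀ m : ℕ, ContinuousOn (oscH (γ - 1) N m) (uIcc 0 δ) := by
    intro m
    rw [uIcc_of_le hδ.le]
    exact oscH_cont _ _ _ _ ha hN hδ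
  have hpos : ∀ x ∈ Ioo (min 0 δ) (max 0 δ), 0 < x := by
    intro x hx
    rw [min_eq_left hδ.le] at hx
    exact hx.1
  induction K with
  | zero =>
    have hi : IntervalIntegrable (fun θ : ℝ => ((θ ^ (γ - 1) : ℝ) : ℂ) *
        Complex.exp (Complex.I * N * θ)) volume 0 δ := by
      have h1 : IntervalIntegrable (fun θ : ℝ => ((θ ^ (γ - 1) : ℝ) : ℂ)) volume 0 δ :=
        have h := intervalIntegral.intervalIntegrable_rpow' (a := 0) (b := δ) ha
        ⟨h.1.ofReal, h.2.ofReal⟩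
      exact h1.mul_continuousOn (by fun_prop)
    have := intervalIntegral.integral_mul_deriv_eq_deriv_mul_of_hasDerivAt (hc 0) (hH 0) (hd 0)
      (fun x hx => oscH_deriv_zero (γ - 1) N x hN (hpos x hx)) (hc 1).intervalIntegrable hi
    rw [hend 0] at this
    simp only [iteratedDerivWithin_zero] at this
    rw [this]
    simp
    ring
  | succ K ih =>
    have := intervalIntegral.integral_mul_deriv_eq_deriv_mul_of_hasDerivAt (hc (K + 1))
      (hH (K + 1)) (hd (K + 1))
      (fun x hx => oscH_deriv_succ (γ - 1) N K x hN (hpos x hx)) (hc (K + 2)).intervalIntegrable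
      (hH K).intervalIntegrable
    rw [ih, this, Finset.sum_range_succ _ (K + 1), hend (K + 1)]
    ring

/-- Fedoryuk-type expansion of an oscillatory integral.
Let `γ > 0`, `δ > 0` and `u : [0, δ] → ℂ` a `C^∞` function all of whose derivatives
vanish at `δ`. Then `∫₀^δ θ^(γ-1) u(θ) e^(inθ) dθ` has the asymptotic expansion
`∑ₘ u^(m)(0) Γ(m+γ) e^(iπ(m+γ)/2) / (m! n^(m+γ))` as `n → ∞`. -/
theorem oscillatoryIntegralExpansion (γ δ : ℝ) (hγ : 0 < γ) (hδ : 0 < δ) (u : ℝ → ℂ)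
    (hu : ContDiffOn ℝ (⊤ : ℕ∞) u (Set.Icc 0 δ))
    (hend : ∀ m : ℕ, iteratedDerivWithin m u (Set.Icc 0 δ) δ = 0) :
    ∀ M : ℕ, ∃ C : ℝ, 0 < C ∧ ∀ n : ℕ, 1 ≤ n →
      ‖(∫ θ in (0:ℝ)..δ, (θ ^ (γ - 1) : ℝ) * u θ * Complex.exp (Complex.I * n * θ)) -
          ∑ m ∈ Finset.range M,
            iteratedDerivWithin m u (Set.Icc 0 δ) 0 * (Real.Gamma ((m : ℝ) + γ) : ℂ) *
              Complex.exp (Complex.I * Real.pi * ((m : ℝ) + γ) / 2) /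
              ((m.factorial : ℂ) * (((n : ℝ) ^ ((m : ℝ) + γ) : ℝ) : ℂ))‖ ≤
        C * (n : ℝ) ^ (-((M : ℝ) + γ)) := by
  intro M
  have ha : -1 < γ - 1 := by linarith
  obtain ⟨K, hK⟩ := exists_nat_ge ((M : ℝ) + γ)
  have hMK : M ≤ K := by
    have : (M : ℝ) ≤ K := by linarith
    exact_mod_cast this
  obtain ⟨C, hC, hF⟩ := oscF_bound (γ - 1) δ ha hδ
  obtain ⟨B, hB⟩ := isCompact_Icc.exists_bound_of_continuousOn
    (hu.continuousOn_iteratedDerivWithin (m := K + 1) (by exact_mod_cast le_top)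
      (uniqueDiffOn_Icc hδ))
  have hB0 : 0 ≤ B := (norm_nonneg _).trans (hB 0 ⟨le_rfl, hδ.le⟩)
  set D : ℝ := Real.Gamma ((K : ℝ) + γ) + C * (2 ^ ((K : ℝ) + 1) * Real.Gamma ((K : ℝ) + 1)) with hD
  have hD0 : 0 < D := by
    have h1 : 0 < Real.Gamma ((K : ℝ) + γ) := Real.Gamma_pos_of_pos (by positivity)
    have h2 : 0 < Real.Gamma ((K : ℝ) + 1) := Real.Gamma_pos_of_pos (by positivity)
    positivity
  set S : ℝ := ∑ m ∈ Finset.Ico M (K + 1),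
    ‖iteratedDerivWithin m u (Set.Icc 0 δ) 0‖ * Real.Gamma ((m : ℝ) + γ) with hS
  have hS0 : 0 ≤ S := Finset.sum_nonneg fun m _ =>
    mul_nonneg (norm_nonneg _) (Real.Gamma_pos_of_pos (by positivity)).le
  refine ⟨S + B * D * δ + 1, by positivity, fun n hn => ?_⟩
  have hN : (1:ℝ) ≤ n := by exact_mod_cast hn
  have hN0 : (0:ℝ) < n := by linarith
  set E : ℝ := (n : ℝ) ^ (-((M : ℝ) + γ)) with hE
  have hE0 : 0 < E := by positivity
  have hpow : ∀ p : ℝ, (M : ℝ) + γ ≤ p → (1 / (n : ℝ)) ^ p ≤ E := by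
    intro p hp
    rw [one_div, Real.inv_rpow hN0.le, ← Real.rpow_neg hN0.le]
    exact Real.rpow_le_rpow_of_exponent_le hN (by linarith)
  have hid := osc_identity γ δ hγ hδ u hu hend n hN K
  have hint : (∫ θ in (0:ℝ)..δ, (θ ^ (γ - 1) : ℝ) * u θ * Complex.exp (Complex.I * n * θ)) =
      ∫ θ in (0:ℝ)..δ, u θ * ((θ ^ (γ - 1) : ℝ) * Complex.exp (Complex.I * (n : ℝ) * θ)) := by
    congr 1; ext θ; push_cast; ring
  have hterm : ∀ m : ℕ, iteratedDerivWithin m u (Set.Icc 0 δ) 0 * (Real.Gamma ((m : ℝ) + γ) : ℂ) *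
              Complex.exp (Complex.I * Real.pi * ((m : ℝ) + γ) / 2) /
              ((m.factorial : ℂ) * (((n : ℝ) ^ ((m : ℝ) + γ) : ℝ) : ℂ)) =
      iteratedDerivWithin m u (Set.Icc 0 δ) 0 * ((-1) ^ (m + 1) * oscH (γ - 1) n m 0) := by
    intro m
    rw [oscH_zero (γ - 1) n m ha hN]
    have e : ((γ - 1 : ℝ) : ℂ) + 1 = γ := by push_cast; ring
    rw [sub_add_cancel, e]
    ring
  rw [Finset.sum_congr rfl fun m _ => hterm m, hint, hid, add_sub_right_comm,
    ← Finset.sum_Ico_eq_sub _ (by omega : M ≤ K + 1)]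
  have hrem : ‖(-1 : ℂ) ^ (K + 1) * ∫ θ in (0:ℝ)..δ,
        iteratedDerivWithin (K + 1) u (Set.Icc 0 δ) θ * oscH (γ - 1) n K θ‖ ≤ B * D * δ * E := by
    rw [norm_mul, norm_pow, norm_neg, norm_one, one_pow, one_mul]
    have := intervalIntegral.norm_integral_le_of_norm_le_const (a := 0) (b := δ)
      (f := fun θ => iteratedDerivWithin (K + 1) u (Set.Icc 0 δ) θ * oscH (γ - 1) n K θ)
      (C := B * (D * E)) ?_
    · rw [sub_zero, abs_of_pos hδ] at this
      refine this.trans (le_of_eq (by ring))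
    · intro θ hθ
      rw [uIoc_of_le hδ.le] at hθ
      rw [norm_mul]
      refine mul_le_mul (hB θ (Ioc_subset_Icc_self hθ)) ?_ (norm_nonneg _) hB0
      refine (oscH_norm _ _ _ _).trans ((hF n K θ hN hθ.1.le hθ.2).trans ?_)
      have e1 : (K : ℝ) + (γ - 1) + 1 = K + γ := by ring
      have e2 : (1 / ((n : ℝ) / 2)) = 2 * (1 / n) := by field_simp
      rw [e1, e2, Real.mul_rpow (by norm_num) (by positivity), hD]
      have h1 : 0 < Real.Gamma ((K : ℝ) + γ) := Real.Gamma_pos_of_pos (by positivity)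
      have h2 : 0 < Real.Gamma ((K : ℝ) + 1) := Real.Gamma_pos_of_pos (by positivity)
      have h3 := hpow (K + γ) (by linarith)
      have h4 := hpow (K + 1) (by linarith)
      calc _ ≤ E * Real.Gamma ((K : ℝ) + γ) +
            C * (2 ^ ((K : ℝ) + 1) * E * Real.Gamma ((K : ℝ) + 1)) := by gcongr
        _ = _ := by ring
  have hsum : ‖∑ m ∈ Finset.Ico M (K + 1), iteratedDerivWithin m u (Set.Icc 0 δ) 0 *
      ((-1) ^ (m + 1) * oscH (γ - 1) n m 0)‖ ≤ S * E := by
    rw [hS, Finset.sum_mul]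
    refine norm_sum_le_of_le _ fun m hm => ?_
    have hm' : (M : ℝ) ≤ m := by exact_mod_cast (Finset.mem_Ico.1 hm).1
    have hG : 0 < Real.Gamma ((m : ℝ) + γ) := Real.Gamma_pos_of_pos (by positivity)
    rw [norm_mul, norm_mul, norm_pow, norm_neg, norm_one, one_pow, one_mul, mul_assoc]
    gcongr
    refine (oscH_norm _ _ _ _).trans ?_
    rw [oscF_zero _ _ _ ha hN, sub_add_cancel]
    have e : Complex.I * Real.pi * ((γ - 1 : ℝ) : ℂ) / 2 =
        ((Real.pi * (γ - 1) / 2 : ℝ) : ℂ) * Complex.I := by push_cast; ring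
    rw [e, norm_div, norm_mul, Complex.norm_exp_ofReal_mul_I, one_mul, Complex.norm_real,
      Complex.norm_real, Real.norm_of_nonneg hG.le, Real.norm_of_nonneg (by positivity)]
    have h3 := hpow (m + γ) (by linarith)
    rw [Real.div_rpow zero_le_one hN0.le, Real.one_rpow] at h3
    calc _ = Real.Gamma ((m : ℝ) + γ) * (1 / (n : ℝ) ^ ((m : ℝ) + γ)) := by ring
      _ ≤ _ := by gcongr
  calc _ ≤ S * E + B * D * δ * E := (norm_add_le _ _).trans (add_le_add hsum hrem)
    _ ≤ _ := by nlinarith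
end

section
/- Let γ > 0, δ > 0 and let u : [0, δ] → ℂ be a C^∞ function such that u^(m)(δ) = 0 for every integer m ≥ 0. Define J_n = ∫₀^δ θ^{γ} u(θ) e^{i n θ} dθ. Then for every natural number M ≥ 1 there exists a constant C > 0 such that for all integers n ≥ 1, | e^{−iγπ/2} · conj(J_n) + e^{iγπ/2} · J_n − 2 Σ_{m=1}^{M} (Γ(γ+m)/(m−1)!) · Re{ u^(m−1)(0) · e^{iπ(2γ+m)/2} } · n^{−γ−m} | ≤ C · n^{−γ−M−1}. (Equivalently, 2 Re{ e^{iγπ/2} J_n } admits the asymptotic expansion 2 Σ_{m≥1} (Γ(γ+m)/(m−1)!) Re{ u^(m−1)(0) e^{iπ(2γ+m)/2} } n^{−γ−m} as n → ∞.) -/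
open Set MeasureTheory Filter Topology
open scoped ContDiff

lemma oscA_bound {δ : ℝ} (hδ : 0 < δ) (K : ℕ) (s : ℝ) (g : ℝ → ℂ)
    (hg : ContDiffOn ℝ (⊤ : ℕ∞) g (Icc 0 δ))
    (h0 : ∀ m < K, iteratedDerivWithin m g (Icc 0 δ) 0 = 0) :
    ∃ C : ℝ, 0 ≤ C ∧ ∀ θ ∈ Ioc 0 δ, ‖((θ ^ s : ℝ) : ℂ) * g θ‖ ≤ C * θ ^ (s + K) := by
  obtain ⟨C, hC⟩ : ∃ C : ℝ, ∀ θ ∈ Icc 0 δ, ‖g θ‖ ≤ C * θ ^ K := by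
    rcases K with _ | K
    · obtain ⟨C, hC⟩ := isCompact_Icc.exists_bound_of_continuousOn hg.continuousOn
      exact ⟨C, by simpa using hC⟩
    · obtain ⟨C, hC⟩ := exists_taylor_mean_remainder_bound (n := K) hδ.le
        (hg.of_le (by exact_mod_cast le_top))
      refine ⟨C, fun θ hθ => ?_⟩
      have := hC θ hθ
      rw [taylor_within_apply, Finset.sum_eq_zero] at this
      · simpa using this
      · intro k hk
        rw [h0 k (Finset.mem_range.1 hk), smul_zero]
  refine ⟨|C|, abs_nonneg _, fun θ hθ => ?_⟩
  have h1 : 0 < θ ^ s := Real.rpow_pos_of_pos hθ.1 s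
  rw [norm_mul, Complex.norm_real, Real.norm_of_nonneg h1.le, Real.rpow_add hθ.1,
    Real.rpow_natCast]
  calc θ ^ s * ‖g θ‖ ≤ θ ^ s * (|C| * θ ^ K) := by
        gcongr
        exact (hC θ ⟨hθ.1.le, hθ.2⟩).trans
          (mul_le_mul_of_nonneg_right (le_abs_self _) (pow_nonneg hθ.1.le _))
    _ = _ := by ring

lemma norm_exp_osc (n : ℕ) (θ : ℝ) : ‖Complex.exp (Complex.I * n * θ)‖ = 1 := by
  rw [Complex.norm_exp]; simp

lemma oscA_bdd {δ : ℝ} (hδ : 0 < δ) (K : ℕ) (s : ℝ) (hs : 0 ≤ s + K) (g : ℝ → ℂ)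
    (hg : ContDiffOn ℝ (⊤ : ℕ∞) g (Icc 0 δ))
    (h0 : ∀ m < K, iteratedDerivWithin m g (Icc 0 δ) 0 = 0) :
    ∃ C : ℝ, 0 ≤ C ∧ ∀ θ ∈ Ioc 0 δ, ‖((θ ^ s : ℝ) : ℂ) * g θ‖ ≤ C := by
  obtain ⟨C, hC, h⟩ := oscA_bound hδ K s g hg h0
  refine ⟨C * δ ^ (s + K), by positivity, fun θ hθ => (h θ hθ).trans ?_⟩
  gcongr
  · exact hθ.1.le
  · exact hθ.2

lemma oscA_int {δ : ℝ} (hδ : 0 < δ) (K : ℕ) (s : ℝ) (hs : 0 ≤ s + K) (g : ℝ → ℂ)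
    (hg : ContDiffOn ℝ (⊤ : ℕ∞) g (Icc 0 δ))
    (h0 : ∀ m < K, iteratedDerivWithin m g (Icc 0 δ) 0 = 0) (n : ℕ) :
    IntervalIntegrable (fun θ : ℝ => ((θ ^ s : ℝ) : ℂ) * g θ * Complex.exp (Complex.I * n * θ))
      volume 0 δ := by
  obtain ⟨C, -, hC⟩ := oscA_bdd hδ K s hs g hg h0
  rw [intervalIntegrable_iff_integrableOn_Ioc_of_le hδ.le]
  refine IntegrableOn.of_bound (by simp) ?_ C ?_
  · refine ContinuousOn.aestronglyMeasurable ?_ measurableSet_Ioc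
    refine ContinuousOn.mul (ContinuousOn.mul ?_ (hg.continuousOn.mono Ioc_subset_Icc_self)) ?_
    · refine Complex.continuous_ofReal.comp_continuousOn ?_
      exact fun x hx => (Real.continuousAt_rpow_const x s (Or.inl hx.1.ne')).continuousWithinAt
    · fun_prop
  · filter_upwards [self_mem_ae_restrict measurableSet_Ioc] with θ hθ
    rw [norm_mul, norm_exp_osc, mul_one]
    exact hC θ hθ

lemma oscA {δ : ℝ} (hδ : 0 < δ) (N : ℕ) : ∀ (K : ℕ) (s : ℝ) (g : ℝ → ℂ),
    ContDiffOn ℝ (⊤ : ℕ∞) g (Icc 0 δ) →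
    (∀ m, iteratedDerivWithin m g (Icc 0 δ) δ = 0) →
    (∀ m < K, iteratedDerivWithin m g (Icc 0 δ) 0 = 0) → (N : ℝ) ≤ s + K →
    ∃ C : ℝ, ∀ n : ℕ, 1 ≤ n →
      ‖∫ θ in (0:ℝ)..δ, ((θ ^ s : ℝ) : ℂ) * g θ * Complex.exp (Complex.I * n * θ)‖
        ≤ C * ((n : ℝ) ^ N)⁻¹ := by
  induction N with
  | zero =>
    intro K s g hg hd h0 hs
    obtain ⟨C, -, hC⟩ := oscA_bdd hδ K s (by simpa using hs) g hg h0
    refine ⟨C * |δ - 0|, fun n hn => ?_⟩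
    simp only [pow_zero, inv_one, mul_one]
    refine intervalIntegral.norm_integral_le_of_norm_le_const fun θ hθ => ?_
    rw [uIoc_of_le hδ.le] at hθ
    rw [norm_mul, norm_exp_osc, mul_one]
    exact hC θ hθ
  | succ N ih =>
    intro K s g hg hd h0 hs
    push_cast at hs
    have hN : (0:ℝ) ≤ N := N.cast_nonneg
    have hU : UniqueDiffOn ℝ (Icc 0 δ) := uniqueDiffOn_Icc hδ
    set g' := derivWithin g (Icc 0 δ) with hg'def
    have hg' : ContDiffOn ℝ (⊤ : ℕ∞) g' (Icc 0 δ) := hg.derivWithin hU (by simp)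
    have hd' : ∀ m, iteratedDerivWithin m g' (Icc 0 δ) δ = 0 := fun m => by
      have := hd (m+1); rwa [iteratedDerivWithin_succ'] at this
    have h0' : ∀ m < K - 1, iteratedDerivWithin m g' (Icc 0 δ) 0 = 0 := fun m hm => by
      have := h0 (m+1) (by omega); rwa [iteratedDerivWithin_succ'] at this
    have hs1 : (N:ℝ) ≤ (s - 1) + K := by linarith
    have hs2 : (N:ℝ) ≤ s + (K - 1 : ℕ) := by
      have : (K:ℝ) ≤ (K - 1 : ℕ) + 1 := by exact_mod_cast (by omega : K ≤ K - 1 + 1)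
      linarith
    obtain ⟨C1, hC1⟩ := ih K (s-1) g hg hd h0 hs1
    obtain ⟨C2, hC2⟩ := ih (K-1) s g' hg' hd' h0' hs2
    refine ⟨|s| * C1 + C2, fun n hn => ?_⟩
    have i0 := oscA_int hδ K s (by linarith) g hg h0 n
    have i1 := oscA_int hδ K (s-1) (by linarith) g hg h0 n
    have i2 := oscA_int hδ (K-1) s (by linarith) g' hg' h0' n
    have hn' : (0:ℝ) < n := by exact_mod_cast hn
    have key := intervalIntegral.integral_eq_sub_of_hasDerivAt_of_tendsto
      (f := fun θ : ℝ => ((θ ^ s : ℝ) : ℂ) * g θ * Complex.exp (Complex.I * n * θ))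
      (f' := fun θ : ℝ => (s:ℂ) * (((θ ^ (s-1) : ℝ) : ℂ) * g θ * Complex.exp (Complex.I * n * θ))
        + ((θ ^ s : ℝ) : ℂ) * g' θ * Complex.exp (Complex.I * n * θ)
        + (Complex.I * n) * (((θ ^ s : ℝ) : ℂ) * g θ * Complex.exp (Complex.I * n * θ)))
      (fa := 0) (fb := 0) hδ ?_ (((i1.const_mul _).add i2).add (i0.const_mul _)) ?_ ?_
    · rw [intervalIntegral.integral_add ((i1.const_mul _).add i2) (i0.const_mul _),
        intervalIntegral.integral_add (i1.const_mul _) i2,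
        intervalIntegral.integral_const_mul, intervalIntegral.integral_const_mul, sub_zero] at key
      have e := eq_neg_of_add_eq_zero_right key
      have e2 := congrArg norm e
      rw [norm_mul, norm_neg, norm_mul, Complex.norm_I, one_mul, Complex.norm_natCast] at e2
      have e3 := norm_add_le ((s:ℂ) * ∫ θ in (0:ℝ)..δ, ((θ ^ (s-1) : ℝ) : ℂ) * g θ * Complex.exp (Complex.I * n * θ)) (∫ θ in (0:ℝ)..δ, ((θ ^ s : ℝ) : ℂ) * g' θ * Complex.exp (Complex.I * n * θ))
      rw [← e2, norm_mul, Complex.norm_real, Real.norm_eq_abs] at e3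
      have e4 := mul_le_mul_of_nonneg_left (hC1 n hn) (abs_nonneg s)
      have e5 := hC2 n hn
      rw [← mul_le_mul_iff_right₀ hn']
      calc _ ≤ _ := e3
        _ ≤ _ := add_le_add e4 e5
        _ = _ := by rw [pow_succ]; field_simp
    · intro θ hθ
      have d1 : HasDerivAt (fun θ : ℝ => ((θ ^ s : ℝ) : ℂ)) ((s * θ ^ (s-1) : ℝ) : ℂ) θ :=
        (Real.hasDerivAt_rpow_const (Or.inl hθ.1.ne')).ofReal_comp
      have d2 : HasDerivAt g (g' θ) θ :=
        ((hg.differentiableOn (by simp)) θ (Ioo_subset_Icc_self hθ)).hasDerivWithinAt.hasDerivAt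
          (Icc_mem_nhds hθ.1 hθ.2)
      have d3 : HasDerivAt (fun θ : ℝ => Complex.exp (Complex.I * n * θ))
          (Complex.exp (Complex.I * n * θ) * (Complex.I * n * 1)) θ :=
        ((Complex.ofRealCLM.hasDerivAt (x := θ)).const_mul (Complex.I * n)).cexp
      refine ((d1.mul d2).mul d3).congr_deriv ?_
      push_cast; simp only [Pi.mul_apply]; ring
    · obtain ⟨C, hC, hb⟩ := oscA_bound hδ K s g hg h0
      refine squeeze_zero_norm' (a := fun θ : ℝ => C * θ ^ (s + K)) ?_ ?_
      · filter_upwards [Ioc_mem_nhdsGT hδ] with θ hθ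
        rw [norm_mul, norm_exp_osc, mul_one]
        exact hb θ hθ
      · have h : ContinuousAt (fun θ : ℝ => C * θ ^ (s + K)) 0 :=
          continuousAt_const.mul (Real.continuousAt_rpow_const _ _ (Or.inr (by linarith)))
        have := h.tendsto.mono_left (nhdsWithin_le_nhds (s := Ioi 0))
        simpa [Real.zero_rpow (by linarith : s + K ≠ 0)] using this
    · have hgd : g δ = 0 := by simpa using hd 0
      have c1 : ContinuousWithinAt g (Iio δ) δ := by
        have := (hg.continuousOn δ ⟨hδ.le, le_rfl⟩)
        refine this.mono_of_mem_nhdsWithin ?_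
        exact mem_of_superset (Ioo_mem_nhdsLT hδ) Ioo_subset_Icc_self
      have c2 : ContinuousWithinAt (fun θ : ℝ => ((θ ^ s : ℝ) : ℂ)) (Iio δ) δ :=
        (Complex.continuous_ofReal.continuousAt.comp
          (Real.continuousAt_rpow_const δ s (Or.inl hδ.ne'))).continuousWithinAt
      have c3 : ContinuousWithinAt (fun θ : ℝ => Complex.exp (Complex.I * n * θ)) (Iio δ) δ := by
        fun_prop
      have := ((c2.mul c1).mul c3).tendsto
      simp only [Pi.mul_apply, hgd, mul_zero, zero_mul] at this
      exact this
lemma lap_bigO {f : ℝ → ℂ} {s : ℝ} (hO : f =O[atTop] fun θ : ℝ => θ ^ s) {z : ℂ} (hz : 0 < z.re) :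
    (fun θ : ℝ => f θ * Complex.exp (-(z * θ))) =O[atTop]
      fun θ : ℝ => Real.exp (-(z.re / 2) * θ) := by
  have h1 : (fun θ : ℝ => θ ^ s) =O[atTop] fun θ : ℝ => Real.exp (z.re / 2 * θ) :=
    (isLittleO_rpow_exp_pos_mul_atTop s (by linarith)).isBigO
  have h2 : (fun θ : ℝ => Complex.exp (-(z * θ))) =O[atTop] fun θ : ℝ => Real.exp (-z.re * θ) := by
    refine Asymptotics.IsBigO.of_bound 1 (Eventually.of_forall fun θ => ?_)
    rw [Complex.norm_exp, Real.norm_of_nonneg (Real.exp_pos _).le]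
    simp
  refine ((hO.trans h1).mul h2).congr_right fun θ => ?_
  rw [← Real.exp_add]; congr 1; ring

lemma lap_int {f : ℝ → ℂ} {s : ℝ} (hc : ContinuousOn f (Ici 0))
    (hO : f =O[atTop] fun θ : ℝ => θ ^ s) {z : ℂ} (hz : 0 < z.re) :
    IntegrableOn (fun θ : ℝ => f θ * Complex.exp (-(z * θ))) (Ioi 0) := by
  have hc' : ContinuousOn (fun θ : ℝ => f θ * Complex.exp (-(z * θ))) (Ici 0) :=
    hc.mul (by fun_prop)
  have h := integrable_of_isBigO_exp_neg (half_pos hz) hc'.norm (lap_bigO hO hz).norm_left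
  exact (integrable_norm_iff
    ((hc'.mono Ioi_subset_Ici_self).aestronglyMeasurable measurableSet_Ioi)).1 h

lemma lap_tendsto {f : ℝ → ℂ} {s : ℝ}
    (hO : f =O[atTop] fun θ : ℝ => θ ^ s) {z : ℂ} (hz : 0 < z.re) :
    Tendsto (fun θ : ℝ => f θ * Complex.exp (-(z * θ))) atTop (𝓝 0) := by
  refine (lap_bigO hO hz).trans_tendsto ?_
  refine Real.tendsto_exp_atBot.comp ?_
  exact tendsto_id.const_mul_atTop_of_neg (by linarith)

lemma lap_ibp {f f' : ℝ → ℂ} {s s' : ℝ} (hc : ContinuousOn f (Ici 0))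
    (hc' : ContinuousOn f' (Ici 0)) (hO : f =O[atTop] fun θ : ℝ => θ ^ s)
    (hO' : f' =O[atTop] fun θ : ℝ => θ ^ s') (hd : ∀ x ∈ Ioi (0:ℝ), HasDerivAt f (f' x) x)
    (h0 : f 0 = 0) {z : ℂ} (hz : 0 < z.re) :
    z * ∫ θ in Ioi (0:ℝ), f θ * Complex.exp (-(z * θ)) =
      ∫ θ in Ioi (0:ℝ), f' θ * Complex.exp (-(z * θ)) := by
  have i0 := lap_int hc hO hz
  have i1 := lap_int hc' hO' hz
  have key := MeasureTheory.integral_Ioi_of_hasDerivAt_of_tendsto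
    (f := fun θ : ℝ => f θ * Complex.exp (-(z * θ)))
    (f' := fun θ : ℝ => f' θ * Complex.exp (-(z * θ)) - z * (f θ * Complex.exp (-(z * θ))))
    (a := 0) (m := 0) ?_ ?_ (i1.sub (i0.const_mul z)) (lap_tendsto hO hz)
  · rw [integral_sub i1 (i0.const_mul z), integral_const_mul, h0] at key
    simp only [zero_mul, sub_zero] at key
    exact (sub_eq_zero.1 key).symm
  · exact (hc 0 self_mem_Ici).mul (by fun_prop)
  · intro x hx
    have d3 : HasDerivAt (fun θ : ℝ => Complex.exp (-(z * θ)))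
          (Complex.exp (-(z * x)) * (-(z * 1))) x :=
        ((Complex.ofRealCLM.hasDerivAt (x := x)).const_mul z).neg.cexp
    refine ((hd x hx).mul d3).congr_deriv ?_
    ring

lemma lapB {d : ℝ} (hd : 0 < d) (N : ℕ) : ∀ (s : ℝ) (a : ℂ) (f : ℝ → ℂ),
    ContDiff ℝ (⊤ : ℕ∞) f → (∀ x ≤ 0, f x = 0) → (∀ x > d, f x = a * ((x ^ s : ℝ) : ℂ)) →
    s - N < -1 → ∃ C : ℝ, ∀ z : ℂ, 0 < z.re →
      ‖∫ θ in Ioi (0:ℝ), f θ * Complex.exp (-(z * θ))‖ ≤ C * (‖z‖ ^ N)⁻¹ := by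
  have big : ∀ (s : ℝ) (a : ℂ) (f : ℝ → ℂ), (∀ x > d, f x = a * ((x ^ s : ℝ) : ℂ)) →
      f =O[atTop] fun θ : ℝ => θ ^ s := by
    intro s a f h
    refine Asymptotics.IsBigO.of_bound ‖a‖ ?_
    filter_upwards [eventually_gt_atTop d] with x hx
    rw [h x hx, norm_mul, Complex.norm_real]
  induction N with
  | zero =>
    intro s a f hf h0 hinf hs
    have hi : IntegrableOn f (Ioi 0) := by
      rw [← Ioc_union_Ioi_eq_Ioi hd.le]
      refine IntegrableOn.union ?_ ?_
      · exact (hf.continuous.continuousOn.integrableOn_Icc).mono_set Ioc_subset_Icc_self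
      · have : IntegrableOn (fun x : ℝ => a * ((x ^ s : ℝ) : ℂ)) (Ioi d) :=
          (integrableOn_Ioi_rpow_of_lt (by simpa using hs) hd).ofReal.const_mul a
        exact this.congr_fun (fun x hx => (hinf x hx).symm) measurableSet_Ioi
    refine ⟨∫ θ in Ioi (0:ℝ), ‖f θ‖, fun z hz => ?_⟩
    simp only [pow_zero, inv_one, mul_one]
    refine norm_integral_le_of_norm_le hi.norm ?_
    filter_upwards [self_mem_ae_restrict measurableSet_Ioi] with θ hθ
    rw [norm_mul, Complex.norm_exp]
    refine mul_le_of_le_one_right (norm_nonneg _) (Real.exp_le_one_iff.2 ?_)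
    have : 0 < z.re * θ := mul_pos hz hθ
    simp [this.le]
  | succ N ih =>
    intro s a f hf h0 hinf hs
    have hf' : ContDiff ℝ (⊤ : ℕ∞) (deriv f) := by
      have := contDiff_infty_iff_deriv.1 hf
      exact this.2
    have hdf : ∀ x, HasDerivAt f (deriv f x) x := fun x =>
      ((hf.differentiable (by simp)) x).hasDerivAt
    have h0' : ∀ x ≤ 0, deriv f x = 0 := by
      intro x hx
      have h1 : HasDerivWithinAt f 0 (Iic x) x :=
        (hasDerivWithinAt_const x (Iic x) (0:ℂ)).congr (fun y hy => h0 y (le_trans hy hx)) (h0 x hx)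
      exact (uniqueDiffWithinAt_Iic x).eq_deriv _ (hdf x).hasDerivWithinAt h1
    have hinf' : ∀ x > d, deriv f x = (a * s) * ((x ^ (s - 1) : ℝ) : ℂ) := by
      intro x hx
      have h1 : HasDerivAt (fun x : ℝ => a * ((x ^ s : ℝ) : ℂ)) (a * ((s * x ^ (s-1) : ℝ) : ℂ)) x :=
        ((Real.hasDerivAt_rpow_const (Or.inl (hd.trans hx).ne')).ofReal_comp).const_mul a
      have h2 : f =ᶠ[𝓝 x] fun x : ℝ => a * ((x ^ s : ℝ) : ℂ) := by
        filter_upwards [Ioi_mem_nhds hx] with y hy using hinf y hy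
      rw [(h1.congr_of_eventuallyEq h2).deriv]
      push_cast; ring
    obtain ⟨C, hC⟩ := ih (s-1) (a*s) (deriv f) hf' h0' hinf' (by push_cast at hs; linarith)
    refine ⟨C, fun z hz => ?_⟩
    have key := lap_ibp hf.continuous.continuousOn hf'.continuous.continuousOn
      (big _ _ _ hinf) (big _ _ _ hinf') (fun x _ => hdf x) (h0 0 le_rfl) hz
    have hz0 : 0 < ‖z‖ := norm_pos_iff.2 (fun h => by simp [h] at hz)
    have h3 := hC z hz
    rw [← key, norm_mul] at h3
    rw [← mul_le_mul_iff_right₀ hz0]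
    refine h3.trans (le_of_eq ?_)
    rw [pow_succ]; field_simp

lemma rpow_cont {s : ℝ} (hs : 0 < s) : Continuous (fun θ : ℝ => ((θ ^ s : ℝ) : ℂ)) :=
  Complex.continuous_ofReal.comp (Real.continuous_rpow_const hs.le)

lemma rpow_bigO (s : ℝ) : (fun θ : ℝ => ((θ ^ s : ℝ) : ℂ)) =O[atTop] fun θ : ℝ => θ ^ s :=
  Asymptotics.IsBigO.of_bound 1 (Eventually.of_forall fun θ => by simp)

lemma lap_gamma {s : ℝ} (hs : 0 < s) {z : ℂ} (hz : 0 < z.re) :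
    ∫ θ in Ioi (0:ℝ), ((θ ^ s : ℝ) : ℂ) * Complex.exp (-(z * θ)) =
      Real.Gamma (s + 1) * z ^ (-(s + 1 : ℂ)) := by
  set G : ℂ → ℂ := fun z => ∫ θ in Ioi (0:ℝ), ((θ ^ s : ℝ) : ℂ) * Complex.exp (-(z * θ)) with hG
  have hs1 : 0 < s + 1 := by linarith
  have hne : ∀ z : ℂ, 0 < z.re → z ≠ 0 := fun z hz h => by simp [h] at hz
  have hibp : ∀ z : ℂ, 0 < z.re →
      z * ∫ θ in Ioi (0:ℝ), ((θ ^ (s+1) : ℝ) : ℂ) * Complex.exp (-(z * θ)) = (s + 1) * G z := by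
    intro z hz
    rw [lap_ibp (f' := fun θ : ℝ => ((s+1:ℝ):ℂ) * ((θ ^ s : ℝ) : ℂ)) (rpow_cont hs1).continuousOn
      ((rpow_cont hs).const_mul _).continuousOn (rpow_bigO _) ((rpow_bigO s).const_mul_left _) ?_
      (by simp [Real.zero_rpow hs1.ne']) hz]
    · simp only [hG, mul_assoc]
      rw [integral_const_mul]; push_cast; rfl
    · intro x hx
      have := (Real.hasDerivAt_rpow_const (p := s+1) (Or.inl (ne_of_gt hx))).ofReal_comp
      convert this using 1
      push_cast; simp
  have hder : ∀ z : ℂ, 0 < z.re → HasDerivAt G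
      (-∫ θ in Ioi (0:ℝ), ((θ ^ (s+1) : ℝ) : ℂ) * Complex.exp (-(z * θ))) z := by
    intro z hz
    have hopen : {w : ℂ | z.re / 2 < w.re} ∈ 𝓝 z :=
      (isOpen_lt continuous_const Complex.continuous_re).mem_nhds (by simp; linarith)
    have h := (hasDerivAt_integral_of_dominated_loc_of_deriv_le (μ := volume.restrict (Ioi (0:ℝ)))
      (F := fun (z : ℂ) (θ : ℝ) => ((θ ^ s : ℝ) : ℂ) * Complex.exp (-(z * θ)))
      (F' := fun (z : ℂ) (θ : ℝ) => -(((θ ^ (s+1) : ℝ) : ℂ) * Complex.exp (-(z * θ))))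
      (bound := fun θ => ‖((θ ^ (s+1) : ℝ) : ℂ) * Complex.exp (-(((z.re/2 : ℝ):ℂ) * θ))‖)
      hopen ?_ ?_ ?_ ?_ ?_ ?_).2
    · rwa [integral_neg] at h
    · refine Eventually.of_forall fun w => ?_
      have := rpow_cont hs
      exact Continuous.aestronglyMeasurable (by fun_prop)
    · exact lap_int (rpow_cont hs).continuousOn (rpow_bigO s) hz
    · have := rpow_cont hs1
      exact Continuous.aestronglyMeasurable (by fun_prop)
    · filter_upwards [self_mem_ae_restrict measurableSet_Ioi] with θ hθ w hw
      rw [norm_neg, norm_mul, norm_mul, Complex.norm_exp, Complex.norm_exp]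
      have hθ' : (0:ℝ) < θ := hθ
      have : z.re / 2 * θ ≤ w.re * θ := mul_le_mul_of_nonneg_right (le_of_lt hw) hθ'.le
      refine mul_le_mul_of_nonneg_left (Real.exp_le_exp.2 ?_) (norm_nonneg _)
      simpa using this
    · exact (lap_int (rpow_cont hs1).continuousOn (rpow_bigO _) (by simpa using hz)).norm
    · filter_upwards [self_mem_ae_restrict measurableSet_Ioi] with θ hθ w hw
      have hθ' : (0:ℝ) < θ := hθ
      have d := ((((hasDerivAt_id w).mul_const (θ:ℂ)).neg).cexp).const_mul ((θ ^ s : ℝ) : ℂ)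
      refine d.congr_deriv ?_
      rw [Real.rpow_add hθ', Real.rpow_one]; push_cast; simp; ring
  have hconst : ∀ z : ℂ, 0 < z.re → HasDerivAt (fun z => z ^ (s + 1 : ℂ) * G z) 0 z := by
    intro z hz
    have d1 : HasDerivAt (fun z : ℂ => z ^ (s + 1 : ℂ)) ((s + 1 : ℂ) * z ^ ((s + 1 : ℂ) - 1) * 1) z :=
      (hasDerivAt_id z).cpow_const (Or.inl hz)
    refine (d1.mul (hder z hz)).congr_deriv ?_
    have e : z ^ (s + 1 : ℂ) = z ^ ((s + 1 : ℂ) - 1) * z := by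
      conv_rhs => rw [← Complex.cpow_one z]
      rw [Complex.cpow_one, Complex.cpow_sub _ _ (hne z hz), Complex.cpow_one,
        div_mul_cancel₀ _ (hne z hz)]
    rw [e]
    linear_combination (-z ^ ((s + 1 : ℂ) - 1)) * hibp z hz
  have hS : IsOpen {z : ℂ | 0 < z.re} := isOpen_lt continuous_const Complex.continuous_re
  have hP : IsPreconnected {z : ℂ | 0 < z.re} := (convex_halfSpace_re_gt 0).isPreconnected
  have heq := hS.is_const_of_deriv_eq_zero hP
    (f := fun z => z ^ (s + 1 : ℂ) * G z)
    (fun z hz => (hconst z hz).differentiableAt.differentiableWithinAt)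
    (fun z hz => (hconst z hz).deriv) hz (show (1:ℂ) ∈ _ by simp)
  have hG1 : G 1 = Real.Gamma (s + 1) := by
    rw [Real.Gamma_eq_integral hs1, ← integral_complex_ofReal]
    refine setIntegral_congr_fun measurableSet_Ioi fun θ hθ => ?_
    simp; ring
  simp only [Complex.one_cpow, one_mul, hG1] at heq
  rw [← heq, Complex.cpow_neg]
  have := (Complex.cpow_ne_zero_iff_of_exponent_ne_zero (x := z) (y := (s+1:ℂ)) (by exact_mod_cast hs1.ne')).2 (hne z hz)
  change G z = _
  field_simp
lemma oscC {δ c d : ℝ} (hc : 0 < c) (hcd : c < d) (hd : d < δ) {η : ℝ → ℝ}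
    (hη : ContDiff ℝ (⊤ : ℕ∞) η) (h0 : ∀ x ≤ c, η x = 0) (h1 : ∀ x, d ≤ x → η x = 1)
    {s : ℝ} (hs : 0 < s) (N : ℕ) : ∃ C : ℝ, 0 ≤ C ∧ ∀ n : ℕ, 1 ≤ n →
      ‖(∫ θ in (0:ℝ)..δ, ((θ ^ s : ℝ) : ℂ) * ((1 - η θ : ℝ) : ℂ) * Complex.exp (Complex.I * n * θ))
        - Real.Gamma (s + 1) * (((n : ℝ) ^ (-(s + 1)) : ℝ) : ℂ)
          * Complex.exp (Complex.I * Real.pi * (s + 1) / 2)‖ ≤ C * ((n : ℝ) ^ N)⁻¹ := by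
  have hdpos : 0 < d := hc.trans hcd
  have hδ : 0 < δ := hdpos.trans hd
  set N' := max N (⌈s⌉₊ + 2) with hN'
  set f : ℝ → ℂ := fun θ => ((θ ^ s * η θ : ℝ) : ℂ) with hf
  have hfs : ContDiff ℝ (⊤ : ℕ∞) f := by
    refine Complex.ofRealCLM.contDiff.comp ?_
    rw [contDiff_iff_contDiffAt]
    intro x
    rcases lt_or_ge x c with hx | hx
    · refine (contDiffAt_const (c := (0:ℝ))).congr_of_eventuallyEq ?_
      filter_upwards [Iio_mem_nhds hx] with y hy
      exact (congrArg (fun t => y ^ s * t) (h0 y (le_of_lt hy))).trans (mul_zero _)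
    · exact (Real.contDiffAt_rpow_const_of_ne (by linarith)).mul hη.contDiffAt
  have hsN : s - N' < -1 := by
    have h2 : ((⌈s⌉₊ + 2 : ℕ) : ℝ) ≤ N' := by exact_mod_cast le_max_right _ _
    have := Nat.le_ceil s
    push_cast at h2
    linarith
  obtain ⟨C, hC⟩ := lapB hdpos N' s 1 f hfs (fun x hx => by simp [hf, h0 x (by linarith)])
    (fun x hx => by simp [hf, h1 x hx.le]) hsN
  have hfO : f =O[atTop] fun θ : ℝ => θ ^ s := by
    refine Asymptotics.IsBigO.of_bound 1 ?_
    filter_upwards [eventually_ge_atTop d] with x hx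
    simp [hf, h1 x hx]
  have hrc := rpow_cont hs
  have hηc : Continuous η := hη.continuous
  have hid : ∀ z : ℂ, 0 < z.re →
      (∫ θ in (0:ℝ)..δ, ((θ ^ s : ℝ) : ℂ) * ((1 - η θ : ℝ) : ℂ) * Complex.exp (-(z * θ)))
        - Real.Gamma (s + 1) * z ^ (-(s + 1 : ℂ))
      = - ∫ θ in Ioi (0:ℝ), f θ * Complex.exp (-(z * θ)) := by
    intro z hz
    rw [← lap_gamma hs hz, intervalIntegral.integral_of_le hδ.le]
    have e1 : ∫ θ in Ioc 0 δ, ((θ ^ s : ℝ) : ℂ) * ((1 - η θ : ℝ) : ℂ) * Complex.exp (-(z * θ))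
        = ∫ θ in Ioi (0:ℝ), ((θ ^ s : ℝ) : ℂ) * ((1 - η θ : ℝ) : ℂ) * Complex.exp (-(z * θ)) := by
      refine (setIntegral_eq_of_subset_of_forall_sdiff_eq_zero measurableSet_Ioi
        Ioc_subset_Ioi_self ?_).symm
      intro x hx
      have : δ < x := by
        by_contra h
        exact hx.2 ⟨hx.1, not_lt.1 h⟩
      simp [h1 x (by linarith)]
    have i1 := lap_int hrc.continuousOn (rpow_bigO s) hz
    have i2 := lap_int hfs.continuous.continuousOn hfO hz
    have e2 : ∫ θ in Ioi (0:ℝ), ((θ ^ s : ℝ) : ℂ) * ((1 - η θ : ℝ) : ℂ) * Complex.exp (-(z * θ))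
        = (∫ θ in Ioi (0:ℝ), ((θ ^ s : ℝ) : ℂ) * Complex.exp (-(z * θ)))
          - ∫ θ in Ioi (0:ℝ), f θ * Complex.exp (-(z * θ)) := by
      rw [← integral_sub i1 i2]
      refine integral_congr_ae (Eventually.of_forall fun θ => ?_)
      simp only [hf]; push_cast; ring
    rw [e1, e2]; ring
  refine ⟨|C|, abs_nonneg _, fun n hn => ?_⟩
  have hn' : (0:ℝ) < n := by exact_mod_cast hn
  have hn1 : (1:ℝ) ≤ n := by exact_mod_cast hn
  set w : ℂ := -(Complex.I * n) with hw
  have hwslit : w ∈ Complex.slitPlane := by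
    right; simp [hw]; omega
  -- limit
  have hcont : ContinuousAt (fun z : ℂ =>
      (∫ θ in (0:ℝ)..δ, ((θ ^ s : ℝ) : ℂ) * ((1 - η θ : ℝ) : ℂ) * Complex.exp (-(z * θ)))
        - Real.Gamma (s + 1) * z ^ (-(s + 1 : ℂ))) w := by
    refine ContinuousAt.sub ?_ (continuousAt_const.mul (continuousAt_id.cpow continuousAt_const hwslit))
    refine (intervalIntegral.continuous_parametric_intervalIntegral_of_continuous' ?_ 0 δ).continuousAt
    have a1 : Continuous (fun p : ℂ × ℝ => ((p.2 ^ s : ℝ) : ℂ)) := hrc.comp continuous_snd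
    simp only [Function.uncurry_def]
    fun_prop
  have hpath : Tendsto (fun ε : ℝ => w + ε) (𝓝[>] 0) (𝓝 w) := by
    have : Continuous (fun ε : ℝ => w + ε) := by fun_prop
    have h := (this.tendsto 0).mono_left (nhdsWithin_le_nhds (s := Ioi (0:ℝ)))
    simpa using h
  have hlim := (hcont.tendsto.comp hpath).norm
  have hle := le_of_tendsto hlim (b := |C| * ((n : ℝ) ^ N)⁻¹) ?_
  · have e1 : ∀ θ : ℝ, Complex.exp (Complex.I * n * θ) = Complex.exp (-(w * θ)) := fun θ => by
      simp [hw]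
    have e2 : Real.Gamma (s + 1) * (((n : ℝ) ^ (-(s + 1)) : ℝ) : ℂ)
          * Complex.exp (Complex.I * Real.pi * (s + 1) / 2) =
          Real.Gamma (s + 1) * w ^ (-(s + 1 : ℂ)) := by
      rw [mul_assoc]
      congr 1
      have hlog : Complex.log w = Real.log n - Real.pi / 2 * Complex.I := by
        have : w = (n:ℝ) * (-Complex.I) := by simp [hw]; ring
        rw [this, Complex.log_ofReal_mul hn' (by simp), Complex.log_neg_I]; ring
      rw [Complex.cpow_def_of_ne_zero (Complex.slitPlane_ne_zero hwslit), hlog,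
        Real.rpow_def_of_pos hn', Complex.ofReal_exp, ← Complex.exp_add]
      congr 1
      push_cast; ring
    simp only [e1]
    rw [e2]
    exact hle
  · filter_upwards [self_mem_nhdsWithin] with ε hε
    have hε' : (0:ℝ) < ε := hε
    have hre : 0 < (w + ε).re := by simp [hw, hε']
    simp only [Function.comp]
    rw [hid _ hre, norm_neg]
    refine (hC _ hre).trans ?_
    have hnz : (n:ℝ) ≤ ‖w + ε‖ := by
      have := Complex.abs_im_le_norm (w + ε)
      simpa [hw] using this
    refine mul_le_mul (le_abs_self C) ?_ (by positivity) (abs_nonneg _)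
    gcongr
    calc (n:ℝ) ^ N ≤ (n:ℝ) ^ N' := pow_le_pow_right₀ hn1 (le_max_left _ _)
      _ ≤ _ := by gcongr

lemma mono_deriv (a : ℂ) (j : ℕ) : ∀ k : ℕ,
    iteratedDeriv j (fun θ : ℝ => a * (θ:ℂ) ^ k / (k.factorial : ℂ)) 0 = if j = k then a else 0 := by
  induction j with
  | zero =>
    intro k
    rcases k with _ | k <;> simp
  | succ j ih =>
    intro k
    rw [iteratedDeriv_succ']
    rcases k with _ | k
    · simp
    · have : deriv (fun θ : ℝ => a * (θ:ℂ) ^ (k+1) / ((k+1).factorial : ℂ))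
          = fun θ : ℝ => a * (θ:ℂ) ^ k / (k.factorial : ℂ) := by
        ext θ
        have d := (((Complex.ofRealCLM.hasDerivAt (x := θ)).pow (k+1)).const_mul a).div_const
          ((k+1).factorial : ℂ)
        refine d.deriv.trans ?_
        have : (k.factorial : ℂ) ≠ 0 := by exact_mod_cast k.factorial_ne_zero
        have : (k + 1 : ℂ) ≠ 0 := by exact_mod_cast k.succ_ne_zero
        rw [Nat.factorial_succ]
        push_cast
        simp
        field_simp
      rw [this, ih k]
      simp

lemma expansion (γ δ : ℝ) (hγ : 0 < γ) (hδ : 0 < δ) (u : ℝ → ℂ)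
    (hu : ContDiffOn ℝ (⊤ : ℕ∞) u (Set.Icc 0 δ))
    (hend : ∀ m : ℕ, iteratedDerivWithin m u (Set.Icc 0 δ) δ = 0) (M : ℕ) :
    ∃ C : ℝ, 0 ≤ C ∧ ∀ n : ℕ, 1 ≤ n →
      ‖(∫ θ in (0:ℝ)..δ, ((θ ^ γ : ℝ) : ℂ) * u θ * Complex.exp (Complex.I * n * θ)) -
        ∑ k ∈ Finset.range M, iteratedDerivWithin k u (Icc 0 δ) 0 / (k.factorial : ℂ) *
          (Real.Gamma (γ + k + 1) * (((n : ℝ) ^ (-(γ + k + 1)) : ℝ) : ℂ)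
          * Complex.exp (Complex.I * Real.pi * ((γ + k : ℝ) + 1) / 2))‖ ≤
        C * (n : ℝ) ^ (-γ - M - 1) := by
  set K := M + 1 + ⌈γ⌉₊ with hK
  set a : ℕ → ℂ := fun k => iteratedDerivWithin k u (Icc 0 δ) 0 with ha
  set η : ℝ → ℝ := fun θ => Real.smoothTransition (4 * θ / δ - 1) with hη
  have hηs : ContDiff ℝ (⊤ : ℕ∞) η := Real.smoothTransition.contDiff.comp (by fun_prop)
  have hη0 : ∀ x ≤ δ / 4, η x = 0 := fun x hx => Real.smoothTransition.zero_of_nonpos (by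
    rw [sub_nonpos, div_le_one hδ]; linarith)
  have hη1 : ∀ x, δ / 2 ≤ x → η x = 1 := fun x hx => Real.smoothTransition.one_of_one_le (by
    rw [le_sub_iff_add_le, le_div_iff₀ hδ]; linarith)
  set P : ℕ → ℝ → ℂ := fun k θ => a k * (θ:ℂ) ^ k / (k.factorial : ℂ) with hP
  have hPs : ∀ k, ContDiff ℝ (⊤ : ℕ∞) (P k) := fun k => by
    have : ContDiff ℝ (⊤ : ℕ∞) (fun θ : ℝ => (θ : ℂ)) := Complex.ofRealCLM.contDiff
    simp only [hP]
    exact (contDiff_const.mul (this.pow k)).div_const _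
  set T : ℝ → ℂ := fun θ => ∑ k ∈ Finset.range K, P k θ with hT
  have hTs : ContDiff ℝ (⊤ : ℕ∞) T := ContDiff.sum fun k _ => hPs k
  set Q : ℝ → ℂ := fun θ => T θ * ((1 - η θ : ℝ) : ℂ) with hQ
  have hQs : ContDiff ℝ (⊤ : ℕ∞) Q :=
    hTs.mul (Complex.ofRealCLM.contDiff.comp (contDiff_const.sub hηs))
  have hU : UniqueDiffOn ℝ (Icc 0 δ) := uniqueDiffOn_Icc hδ
  have m0 : (0:ℝ) ∈ Icc 0 δ := ⟨le_rfl, hδ.le⟩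
  have mδ : δ ∈ Icc 0 δ := ⟨hδ.le, le_rfl⟩
  have hle : ∀ m : ℕ, (m : WithTop ℕ∞) ≤ ((⊤ : ℕ∞) : WithTop ℕ∞) := fun m => by
    exact_mod_cast le_top
  have hgd : ∀ m : ℕ, ∀ x ∈ Icc 0 δ, iteratedDerivWithin m (u - Q) (Icc 0 δ) x =
      iteratedDerivWithin m u (Icc 0 δ) x - iteratedDeriv m Q x := fun m x hx => by
    rw [iteratedDerivWithin_sub hx hU ((hu x hx).of_le (hle m))
      ((hQs.of_le (hle m)).contDiffWithinAt),
      iteratedDerivWithin_eq_iteratedDeriv hU ((hQs.of_le (hle m)).contDiffAt) hx]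
  have hQδ : ∀ m, iteratedDeriv m Q δ = 0 := fun m => by
    have : Q =ᶠ[𝓝 δ] fun _ => 0 := by
      filter_upwards [Ioi_mem_nhds (by linarith : δ / 2 < δ)] with x hx
      simp [hQ, hη1 x (le_of_lt hx)]
    rw [Filter.EventuallyEq.iteratedDeriv_eq m this]
    simp
  have hQ0 : ∀ m < K, iteratedDeriv m Q 0 = a m := fun m hm => by
    have : Q =ᶠ[𝓝 0] T := by
      filter_upwards [Iio_mem_nhds (by linarith : 0 < δ / 4)] with x hx
      simp [hQ, hη0 x (le_of_lt hx)]
    rw [Filter.EventuallyEq.iteratedDeriv_eq m this, hT,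
      iteratedDeriv_fun_sum fun k _ => ((hPs k).of_le (hle m)).contDiffAt]
    simp only [hP, mono_deriv]
    simp [hm]
  obtain ⟨C1, hC1⟩ := oscA hδ K K γ (u - Q) (hu.sub hQs.contDiffOn)
    (fun m => by rw [hgd m δ mδ, hend, hQδ, sub_zero])
    (fun m hm => by rw [hgd m 0 m0, hQ0 m hm, sub_self]) (by linarith)
  have hpos : ∀ k : ℕ, 0 < γ + k := fun k => by positivity
  choose C2 hC2n hC2 using fun k : ℕ => oscC (by linarith : 0 < δ / 4) (by linarith : δ/4 < δ/2)
    (by linarith : δ / 2 < δ) hηs hη0 hη1 (hpos k) K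
  set X : ℕ → ℕ → ℂ := fun n k => (Real.Gamma (γ + k + 1) * (((n : ℝ) ^ (-(γ + k + 1)) : ℝ) : ℂ)
          * Complex.exp (Complex.I * Real.pi * ((γ + k : ℝ) + 1) / 2)) with hX
  set b : ℕ → ℂ := fun k => a k / (k.factorial : ℂ) with hb
  refine ⟨|C1| + ∑ k ∈ Finset.range K, ‖b k‖ * C2 k +
    ∑ k ∈ Finset.Ico M K, ‖b k‖ * |Real.Gamma (γ + k + 1)|, ?_, fun n hn => ?_⟩
  · have := Finset.sum_nonneg (s := Finset.range K) (f := fun k => ‖b k‖ * C2 k)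
      fun k _ => mul_nonneg (norm_nonneg _) (hC2n k)
    positivity
  have hn' : (0:ℝ) < n := by exact_mod_cast hn
  have hn1 : (1:ℝ) ≤ n := by exact_mod_cast hn
  set Y : ℕ → ℂ := fun k => ∫ θ in (0:ℝ)..δ, ((θ ^ (γ + k) : ℝ) : ℂ) * ((1 - η θ : ℝ) : ℂ) *
    Complex.exp (Complex.I * n * θ) with hY
  have hηc : Continuous η := hηs.continuous
  have hYi : ∀ k : ℕ, IntervalIntegrable (fun θ : ℝ => ((θ ^ (γ + k) : ℝ) : ℂ) * ((1 - η θ : ℝ) : ℂ) *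
    Complex.exp (Complex.I * n * θ)) volume 0 δ := fun k => by
    have := rpow_cont (hpos k)
    exact Continuous.intervalIntegrable (by fun_prop) _ _
  have hdec : (∫ θ in (0:ℝ)..δ, ((θ ^ γ : ℝ) : ℂ) * u θ * Complex.exp (Complex.I * n * θ)) =
      (∫ θ in (0:ℝ)..δ, ((θ ^ γ : ℝ) : ℂ) * (u - Q) θ * Complex.exp (Complex.I * n * θ))
        + ∑ k ∈ Finset.range K, b k * Y k := by
    have hsi : IntervalIntegrable (fun θ : ℝ => ∑ k ∈ Finset.range K, b k *
        (((θ ^ (γ + k) : ℝ) : ℂ) * ((1 - η θ : ℝ) : ℂ) * Complex.exp (Complex.I * n * θ)))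
        volume 0 δ := by
      have := IntervalIntegrable.sum (Finset.range K) fun k _ => (hYi k).const_mul (b k)
      refine this.congr_ae (Eventually.of_forall fun θ => ?_)
      simp
    simp only [hY, ← intervalIntegral.integral_const_mul]
    rw [← intervalIntegral.integral_finsetSum fun k _ => (hYi k).const_mul _,
      ← intervalIntegral.integral_add
        (oscA_int hδ 0 γ (by simp [hγ.le]) (u - Q) (hu.sub hQs.contDiffOn) (by simp) n)
        hsi]
    refine intervalIntegral.integral_congr_ae (Eventually.of_forall fun θ hθ => ?_)
    rw [uIoc_of_le hδ.le] at hθ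
    have e : ∀ k : ℕ, b k * (((θ ^ (γ + k) : ℝ) : ℂ) * ((1 - η θ : ℝ) : ℂ) *
        Complex.exp (Complex.I * n * θ)) =
        P k θ * (((θ ^ γ : ℝ) : ℂ) * ((1 - η θ : ℝ) : ℂ) * Complex.exp (Complex.I * n * θ)) := by
      intro k
      rw [Real.rpow_add hθ.1, Real.rpow_natCast]
      simp only [hb, hP]; push_cast; ring
    simp only [e]
    rw [← Finset.sum_mul]
    simp only [Pi.sub_apply, hQ, hT]
    ring
  have hsplit : ∑ k ∈ Finset.range K, b k * X n k =
      ∑ k ∈ Finset.range M, b k * X n k + ∑ k ∈ Finset.Ico M K, b k * X n k :=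
    (Finset.sum_range_add_sum_Ico _ (by omega)).symm
  have hE : (∫ θ in (0:ℝ)..δ, ((θ ^ γ : ℝ) : ℂ) * u θ * Complex.exp (Complex.I * n * θ))
        - ∑ k ∈ Finset.range M, b k * X n k =
      (∫ θ in (0:ℝ)..δ, ((θ ^ γ : ℝ) : ℂ) * (u - Q) θ * Complex.exp (Complex.I * n * θ))
        + ∑ k ∈ Finset.range K, b k * (Y k - X n k) + ∑ k ∈ Finset.Ico M K, b k * X n k := by
    simp only [mul_sub, Finset.sum_sub_distrib]
    rw [hdec, hsplit]; ring
  change ‖_ - ∑ k ∈ Finset.range M, b k * X n k‖ ≤ _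
  rw [hE]
  have hKle : ((n:ℝ) ^ K)⁻¹ ≤ (n:ℝ) ^ (-γ - M - 1) := by
    rw [← Real.rpow_natCast, ← Real.rpow_neg hn'.le]
    refine Real.rpow_le_rpow_of_exponent_le hn1 ?_
    have := Nat.le_ceil γ
    rw [hK]; push_cast; linarith
  have hnn : 0 ≤ (n:ℝ) ^ (-γ - M - 1) := by positivity
  have t1 : ‖∫ θ in (0:ℝ)..δ, ((θ ^ γ : ℝ) : ℂ) * (u - Q) θ * Complex.exp (Complex.I * n * θ)‖ ≤
      |C1| * (n:ℝ) ^ (-γ - M - 1) :=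
    (hC1 n hn).trans (mul_le_mul (le_abs_self _) hKle (by positivity) (abs_nonneg _))
  have t2 : ‖∑ k ∈ Finset.range K, b k * (Y k - X n k)‖ ≤
      (∑ k ∈ Finset.range K, ‖b k‖ * C2 k) * (n:ℝ) ^ (-γ - M - 1) := by
    rw [Finset.sum_mul]
    refine norm_sum_le_of_le _ fun k _ => ?_
    rw [norm_mul, mul_assoc]
    refine mul_le_mul_of_nonneg_left ?_ (norm_nonneg _)
    exact (hC2 k n hn).trans (mul_le_mul_of_nonneg_left hKle (hC2n k))
  have t3 : ‖∑ k ∈ Finset.Ico M K, b k * X n k‖ ≤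
      (∑ k ∈ Finset.Ico M K, ‖b k‖ * |Real.Gamma (γ + k + 1)|) * (n:ℝ) ^ (-γ - M - 1) := by
    rw [Finset.sum_mul]
    refine norm_sum_le_of_le _ fun k hk => ?_
    rw [norm_mul, mul_assoc]
    refine mul_le_mul_of_nonneg_left ?_ (norm_nonneg _)
    have hexp : ‖Complex.exp (Complex.I * Real.pi * ((γ + k : ℝ) + 1) / 2)‖ = 1 := by
      rw [show Complex.I * Real.pi * ((γ + k : ℝ) + 1) / 2
        = ((Real.pi * ((γ + k : ℝ) + 1) / 2 : ℝ) : ℂ) * Complex.I by push_cast; ring]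
      exact Complex.norm_exp_ofReal_mul_I _
    rw [hX]
    simp only
    rw [norm_mul, norm_mul, hexp, mul_one, Complex.norm_real, Complex.norm_real, Real.norm_eq_abs,
      Real.norm_of_nonneg (by positivity)]
    refine mul_le_mul_of_nonneg_left ?_ (abs_nonneg _)
    refine Real.rpow_le_rpow_of_exponent_le hn1 ?_
    have : (M:ℝ) ≤ k := by exact_mod_cast (Finset.mem_Ico.1 hk).1
    linarith
  calc _ ≤ _ := norm_add₃_le
    _ ≤ _ := add_le_add (add_le_add t1 t2) t3
    _ = _ := by ring


/-- With `γ > 0`, `δ > 0`, `u : [0,δ] → ℂ` of class `C^∞` with all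
derivatives vanishing at `δ`, and `J_n = ∫₀^δ θ^γ u(θ) e^(inθ) dθ`, the combination
`e^(-iγπ/2) conj(J_n) + e^(iγπ/2) J_n` admits the asymptotic expansion
`2 ∑_{m≥1} (Γ(γ+m)/(m-1)!) Re{u^(m-1)(0) e^(iπ(2γ+m)/2)} n^(-γ-m)` as `n → ∞`. -/
theorem realPartOscillatoryExpansion (γ δ : ℝ) (hγ : 0 < γ) (hδ : 0 < δ) (u : ℝ → ℂ)
    (hu : ContDiffOn ℝ (⊤ : ℕ∞) u (Set.Icc 0 δ))
    (hend : ∀ m : ℕ, iteratedDerivWithin m u (Set.Icc 0 δ) δ = 0)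
    (J : ℕ → ℂ)
    (hJ : ∀ n : ℕ,
      J n = ∫ θ in (0:ℝ)..δ, (θ ^ γ : ℝ) * u θ * Complex.exp (Complex.I * n * θ)) :
    ∀ M : ℕ, 1 ≤ M → ∃ C : ℝ, 0 < C ∧ ∀ n : ℕ, 1 ≤ n →
      ‖Complex.exp (-(Complex.I * γ * Real.pi / 2)) * (starRingEnd ℂ) (J n) +
          Complex.exp (Complex.I * γ * Real.pi / 2) * J n -
          2 * ∑ m ∈ Finset.Icc 1 M,
            ((Real.Gamma (γ + m) / (m - 1).factorial *
                (iteratedDerivWithin (m - 1) u (Set.Icc 0 δ) 0 *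
                  Complex.exp (Complex.I * Real.pi * (2 * γ + m) / 2)).re *
                (n : ℝ) ^ (-γ - m) : ℝ) : ℂ)‖ ≤
        C * (n : ℝ) ^ (-γ - M - 1) := by

  intro M hM
  obtain ⟨C, hC0, hC⟩ := expansion γ δ hγ hδ u hu hend M
  refine ⟨2 * C + 1, by linarith, fun n hn => ?_⟩
  have h := hC n hn
  rw [← hJ n] at h
  set S : ℂ := ∑ k ∈ Finset.range M, iteratedDerivWithin k u (Icc 0 δ) 0 / (k.factorial : ℂ) *
          (Real.Gamma (γ + k + 1) * (((n : ℝ) ^ (-(γ + k + 1)) : ℝ) : ℂ)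
          * Complex.exp (Complex.I * Real.pi * ((γ + k : ℝ) + 1) / 2)) with hS
  set e : ℂ := Complex.exp (Complex.I * γ * Real.pi / 2) with he
  have hconj : Complex.exp (-(Complex.I * γ * Real.pi / 2)) = (starRingEnd ℂ) e := by
    rw [he, ← Complex.exp_conj]
    congr 1
    have h2 : (starRingEnd ℂ) (2:ℂ) = 2 := Complex.conj_ofNat 2
    simp only [map_div₀, map_mul, Complex.conj_I, Complex.conj_ofReal, h2]
    ring
  have hen : ‖e‖ = 1 := by
    rw [he, show Complex.I * γ * Real.pi / 2 = ((γ * Real.pi / 2 : ℝ) : ℂ) * Complex.I by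
      push_cast; ring]
    exact Complex.norm_exp_ofReal_mul_I _
  have hsum : ∑ m ∈ Finset.Icc 1 M,
            ((Real.Gamma (γ + m) / (m - 1).factorial *
                (iteratedDerivWithin (m - 1) u (Set.Icc 0 δ) 0 *
                  Complex.exp (Complex.I * Real.pi * (2 * γ + m) / 2)).re *
                (n : ℝ) ^ (-γ - m) : ℝ) : ℂ) = (((e * S).re : ℝ) : ℂ) := by
    rw [← Complex.ofReal_sum]
    congr 1
    rw [hS, Finset.mul_sum, Complex.re_sum, ← Finset.Ico_add_one_right_eq_Icc,
      Finset.sum_Ico_eq_sum_range]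
    refine Finset.sum_congr (by simp) fun k _ => ?_
    have e1 : e * (iteratedDerivWithin k u (Icc 0 δ) 0 / (k.factorial : ℂ) *
          (Real.Gamma (γ + k + 1) * (((n : ℝ) ^ (-(γ + k + 1)) : ℝ) : ℂ)
          * Complex.exp (Complex.I * Real.pi * ((γ + k : ℝ) + 1) / 2))) =
        ((Real.Gamma (γ + k + 1) / k.factorial * (n : ℝ) ^ (-(γ + k + 1)) : ℝ) : ℂ) *
        (iteratedDerivWithin k u (Set.Icc 0 δ) 0 *
                  Complex.exp (Complex.I * Real.pi * (2 * γ + (1 + k : ℕ)) / 2)) := by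
      have : Complex.exp (Complex.I * Real.pi * (2 * γ + (1 + k : ℕ)) / 2) =
          e * Complex.exp (Complex.I * Real.pi * ((γ + k : ℝ) + 1) / 2) := by
        rw [he, ← Complex.exp_add]
        congr 1
        push_cast; ring
      rw [this]
      push_cast; ring
    rw [e1, Complex.re_ofReal_mul, Nat.add_sub_cancel_left,
      show γ + ((1 + k : ℕ) : ℝ) = γ + k + 1 by push_cast; ring,
      show -γ - ((1 + k : ℕ) : ℝ) = -(γ + k + 1) by push_cast; ring]
    ring
  rw [hsum, hconj, ← map_mul, add_comm, Complex.add_conj]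
  rw [← Complex.ofReal_ofNat, ← Complex.ofReal_mul, ← Complex.ofReal_sub, Complex.norm_real,
    ← mul_sub, ← Complex.sub_re, ← mul_sub, norm_mul, Real.norm_eq_abs, Real.norm_eq_abs]
  have h1 := Complex.abs_re_le_norm (e * (J n - S))
  rw [norm_mul, hen, one_mul] at h1
  have hnn : 0 ≤ (n:ℝ) ^ (-γ - M - 1) := by positivity
  rw [abs_two]
  nlinarith
end
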